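/- Let α be a nonzero algebraic complex number, let λ be a nonzero complex number with e^λ = α, and let β be an algebraic complex number with β ∉ ℚ. Then the number α^β = e^{βλ} is transcendental. -/

import Mathlib

/-!
Suppose that `α`, `β` and `γ = exp (β * lam)` lie in a number field `K`. The derivatives of
`F z = ∑ i j, η i j * exp ((i + j * β) * lam * z)` at an integer `l` are, up to powers of `lam`,
the elements `∑ i j, η i j * (i + j * β) ^ k * (α ^ i * γ ^ j) ^ l` of `K`. Siegel's lemma gives
algebraic integers `η i j` of controlled size, not all zero, for which `F` vanishes to order at
least `n` at `0, …, m - 1`. If `β` is irrational, the frequencies `i + j * β` are distinct, so by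
the nonvanishing of a Vandermonde determinant there is a first order `r ≥ n` at which some
derivative `F⁽ʳ⁾(l)` with `l < m` is nonzero. The Schwarz lemma shows that this derivative is very
small because of the many zeros of `F`, whereas its norm over `ℚ` bounds it from below. For `m` a
little more than twice the degree of `K` and `n` large, the two bounds are incompatible.
-/

open scoped Nat

section Schwarz

variable {E : Type*} [NormedAddCommGroup E] [NormedSpace ℂ E] [CompleteSpace E] {F : ℂ → E}

lemma exists_differentiable_eq_sub_pow_smul (hF : Differentiable ℂ F) {a : ℂ} {r : ℕ}
    (hr : r ≤ analyticOrderAt F a) :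
    ∃ G : ℂ → E, Differentiable ℂ G ∧ ∀ z, F z = (z - a) ^ r • G z := by
  obtain ⟨g, hg, hFg⟩ := (natCast_le_analyticOrderAt (hF.analyticAt a)).1 hr
  have hpow {z : ℂ} (hz : z ≠ a) : (z - a) ^ r ≠ 0 := pow_ne_zero _ (sub_ne_zero.2 hz)
  let G := Function.update (fun z ↦ ((z - a) ^ r)⁻¹ • F z) a (g a)
  have G_of_ne {z : ℂ} (hz : z ≠ a) : G z = ((z - a) ^ r)⁻¹ • F z := Function.update_of_ne hz _ _
  refine ⟨G, fun z ↦ ?_, fun z ↦ ?_⟩ <;> obtain rfl | hz := eq_or_ne z a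
  · refine hg.differentiableAt.congr_of_eventuallyEq ?_
    filter_upwards [hFg] with w hw
    obtain rfl | hwz := eq_or_ne w z
    · exact Function.update_self ..
    · rw [G_of_ne hwz, hw, inv_smul_smul₀ (hpow hwz)]
  · have hquot : DifferentiableAt ℂ (fun z ↦ ((z - a) ^ r)⁻¹ • F z) z := by
      have := hpow hz
      fun_prop (disch := assumption)
    refine hquot.congr_of_eventuallyEq ?_
    filter_upwards [eventually_ne_nhds hz] with w hw using G_of_ne hw
  · simpa only [G, Function.update_self] using hFg.self_of_nhds
  · rw [G_of_ne hz, smul_inv_smul₀ (hpow hz)]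

lemma exists_differentiable_eq_prod_sub_pow_smul (hF : Differentiable ℂ F) {S : Finset ℂ} {r : ℕ}
    (hr : ∀ a ∈ S, r ≤ analyticOrderAt F a) :
    ∃ G : ℂ → E, Differentiable ℂ G ∧ ∀ z, F z = (∏ a ∈ S, (z - a) ^ r) • G z := by
  classical
  induction S using Finset.induction_on with
  | empty => exact ⟨F, hF, by simp⟩
  | insert a S ha ih =>
    obtain ⟨G, hG, hFG⟩ := ih fun b hb ↦ hr b (Finset.mem_insert_of_mem hb)
    let P : ℂ → ℂ := fun z ↦ ∏ b ∈ S, (z - b) ^ r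
    have hP : AnalyticAt ℂ P a := by fun_prop
    have hPa : P a ≠ 0 :=
      Finset.prod_ne_zero_iff.2 fun b hb ↦ pow_ne_zero _ (sub_ne_zero.2 fun h ↦ ha (h ▸ hb))
    have horder : analyticOrderAt F a = analyticOrderAt G a := by
      rw [show F = P • G from funext hFG, analyticOrderAt_smul hP (hG.analyticAt a),
        hP.analyticOrderAt_eq_zero.2 hPa, zero_add]
    obtain ⟨H, hH, hGH⟩ :=
      exists_differentiable_eq_sub_pow_smul hG (horder ▸ hr a (Finset.mem_insert_self a S))
    refine ⟨H, hH, fun z ↦ ?_⟩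
    rw [hFG, hGH, smul_smul, Finset.prod_insert ha, mul_comm]

/-- Schwarz lemma with multiplicities: the maximum principle for `F / ∏ a ∈ S, (z - a) ^ r`. -/
theorem norm_le_mul_pow_of_le_analyticOrderAt (hF : Differentiable ℂ F) {S : Finset ℂ} {r : ℕ}
    (hr : ∀ a ∈ S, r ≤ analyticOrderAt F a) {ρ R B : ℝ} (hS : ∀ a ∈ S, ‖a‖ ≤ ρ) (hρR : ρ < R)
    (hB : ∀ z, ‖z‖ = R → ‖F z‖ ≤ B) {z : ℂ} (hz : ‖z‖ ≤ ρ) :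
    ‖F z‖ ≤ B * (2 * ρ / (R - ρ)) ^ (r * S.card) := by
  obtain ⟨G, hG, hFG⟩ := exists_differentiable_eq_prod_sub_pow_smul hF hr
  have hρ : 0 ≤ ρ := (norm_nonneg z).trans hz
  have : 0 < R - ρ := sub_pos.2 hρR
  have hG_sphere (w : ℂ) (hw : ‖w‖ = R) : ‖G w‖ ≤ B / (R - ρ) ^ (r * S.card) := by
    rw [le_div_iff₀' (by positivity)]
    calc (R - ρ) ^ (r * S.card) * ‖G w‖ = (∏ _a ∈ S, (R - ρ) ^ r) * ‖G w‖ := by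
          rw [Finset.prod_const, pow_mul]
      _ ≤ (∏ a ∈ S, ‖w - a‖ ^ r) * ‖G w‖ := by
          gcongr with a ha
          linarith [norm_sub_norm_le w a, hS a ha]
      _ = ‖F w‖ := by simp only [hFG, norm_smul, norm_prod, norm_pow]
      _ ≤ B := hB w hw
  have hG_ball : ‖G z‖ ≤ B / (R - ρ) ^ (r * S.card) := by
    refine Complex.norm_le_of_forall_mem_frontier_norm_le (U := Metric.ball 0 R)
      Metric.isBounded_ball hG.diffContOnCl (fun w hw ↦ hG_sphere w ?_) (subset_closure ?_)
    · simpa [frontier_ball _ (hρ.trans_lt hρR).ne'] using hw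
    · simpa using hz.trans_lt hρR
  calc ‖F z‖ = (∏ a ∈ S, ‖z - a‖ ^ r) * ‖G z‖ := by
        simp only [hFG, norm_smul, norm_prod, norm_pow]
    _ ≤ (∏ a ∈ S, (2 * ρ) ^ r) * (B / (R - ρ) ^ (r * S.card)) := by
        gcongr with a ha
        linarith [norm_sub_le z a, hS a ha]
    _ = B * (2 * ρ / (R - ρ)) ^ (r * S.card) := by
        rw [Finset.prod_const, ← pow_mul, div_pow]
        ring

theorem norm_iteratedDeriv_le_mul_pow_of_le_analyticOrderAt (hF : Differentiable ℂ F)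
    {S : Finset ℂ} {r : ℕ} (hr : ∀ a ∈ S, r ≤ analyticOrderAt F a) {ρ R B : ℝ}
    (hS : ∀ a ∈ S, ‖a‖ ≤ ρ) (hρR : ρ < R) (hB : ∀ z, ‖z‖ = R → ‖F z‖ ≤ B) {z : ℂ}
    (hz : ‖z‖ + 1 ≤ ρ) (k : ℕ) :
    ‖iteratedDeriv k F z‖ ≤ k ! * (B * (2 * ρ / (R - ρ)) ^ (r * S.card)) := by
  have hF_sphere (w : ℂ) (hw : w ∈ Metric.sphere z 1) :
      ‖F w‖ ≤ B * (2 * ρ / (R - ρ)) ^ (r * S.card) := by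
    refine norm_le_mul_pow_of_le_analyticOrderAt hF hr hS hρR hB ?_
    linarith [norm_le_norm_add_norm_sub' w z, mem_sphere_iff_norm.1 hw]
  simpa using Complex.norm_iteratedDeriv_le_of_forall_mem_sphere_norm_le k one_pos
    hF.diffContOnCl hF_sphere

end Schwarz

section ExpSum

variable {ι : Type*} [Fintype ι]

/-- The exponential polynomial `z ↦ ∑ i, η i * exp (w i * z)` with constant coefficients `η` and
frequencies `w`. -/
noncomputable def expSum (η w : ι → ℂ) (z : ℂ) : ℂ := ∑ i, η i * Complex.exp (w i * z)

lemma differentiable_expSum (η w : ι → ℂ) : Differentiable ℂ (expSum η w) := by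
  unfold expSum
  fun_prop

lemma iteratedDeriv_expSum (η w : ι → ℂ) (k : ℕ) (z : ℂ) :
    iteratedDeriv k (expSum η w) z = ∑ i, η i * (w i ^ k * Complex.exp (w i * z)) := by
  unfold expSum
  rw [iteratedDeriv_fun_sum fun i _ ↦ by fun_prop]
  simp only [iteratedDeriv_const_mul_field, iteratedDeriv_cexp_const_mul]

lemma norm_expSum_le {η w : ι → ℂ} {H W : ℝ} (hη : ∀ i, ‖η i‖ ≤ H) (hw : ∀ i, ‖w i‖ ≤ W)
    (z : ℂ) : ‖expSum η w z‖ ≤ Fintype.card ι * H * Real.exp (W * ‖z‖) := by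
  calc ‖expSum η w z‖ ≤ ∑ i, ‖η i‖ * ‖Complex.exp (w i * z)‖ := by
        simpa only [expSum, norm_mul] using
          norm_sum_le Finset.univ fun i ↦ η i * Complex.exp (w i * z)
    _ ≤ ∑ _i : ι, H * Real.exp (W * ‖z‖) := by
        gcongr with i
        · exact (norm_nonneg _).trans (hη i)
        · exact hη i
        · refine (Complex.norm_exp_le_exp_norm _).trans (Real.exp_le_exp.2 ?_)
          rw [norm_mul]
          gcongr
          exact hw i
    _ = Fintype.card ι * H * Real.exp (W * ‖z‖) := by
        rw [Finset.sum_const, nsmul_eq_mul, Finset.card_univ, mul_assoc]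

end ExpSum

section Size

open NumberField

variable {K : Type*} [Field K] [NumberField K]

/-- The size of an element `x` of a number field: `d` is a denominator of `x`, and `B` bounds both
`d` and the house of the algebraic integer `d * x`. Bounding `d` as well lets sizes be raised to a
larger power than the element itself, see `HasSize.pow_of_le`. -/
structure HasSize (d : ℕ) (B : ℝ) (x : K) : Prop where
  denom_pos : 0 < d
  isIntegral : IsIntegral ℤ (d * x)
  denom_le : d ≤ B
  house_le : d * house x ≤ B

lemma exists_hasSize (x : K) : ∃ d B, HasSize d B x := by
  have hx : IsAlgebraic ℤ x :=
    (IsFractionRing.isAlgebraic_iff ℤ ℚ K).2 (Algebra.IsAlgebraic.isAlgebraic x)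
  obtain ⟨d, y, hd, hdx⟩ := hx.exists_nsmul_eq (𝓞 K)
  refine ⟨d, max d (d * house x), Nat.pos_of_ne_zero hd, ?_, le_max_left _ _, le_max_right _ _⟩
  rw [← nsmul_eq_mul, hdx]
  exact y.isIntegral_coe

namespace HasSize

variable {d e : ℕ} {B C : ℝ} {x y : K}

lemma one_le (hx : HasSize d B x) : 1 ≤ B :=
  (Nat.one_le_cast.2 hx.denom_pos).trans hx.denom_le

lemma house_le_bound (hx : HasSize d B x) : house x ≤ B :=
  (le_mul_of_one_le_left (house_nonneg x) (Nat.one_le_cast.2 hx.denom_pos)).trans hx.house_le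

lemma of_isIntegral (hx : IsIntegral ℤ x) (hB : 1 ≤ B) (hxB : house x ≤ B) : HasSize 1 B x :=
  ⟨one_pos, by rwa [Nat.cast_one, one_mul], by rwa [Nat.cast_one], by rwa [Nat.cast_one, one_mul]⟩

lemma mul (hx : HasSize d B x) (hy : HasSize e C y) : HasSize (d * e) (B * C) (x * y) where
  denom_pos := Nat.mul_pos hx.denom_pos hy.denom_pos
  isIntegral := by
    rw [Nat.cast_mul, mul_mul_mul_comm]
    exact hx.isIntegral.mul hy.isIntegral
  denom_le := by
    rw [Nat.cast_mul]
    exact mul_le_mul hx.denom_le hy.denom_le (by positivity) (zero_le_one.trans hx.one_le)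
  house_le := by
    have := house_nonneg y
    calc ((d * e : ℕ) : ℝ) * house (x * y) ≤ (d * e : ℕ) * (house x * house y) := by
          gcongr
          exact house_mul_le x y
      _ = (d * house x) * (e * house y) := by
          rw [Nat.cast_mul, mul_mul_mul_comm]
      _ ≤ B * C := mul_le_mul hx.house_le hy.house_le (by positivity) (zero_le_one.trans hx.one_le)

lemma pow_of_le (hx : HasSize d B x) {k n : ℕ} (hkn : k ≤ n) :
    HasSize (d ^ n) (B ^ n) (x ^ k) where
  denom_pos := Nat.pow_pos hx.denom_pos
  isIntegral := by
    have hsplit : ((d ^ n : ℕ) : K) * x ^ k = (d ^ (n - k) : ℕ) * (d * x) ^ k := by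
      rw [mul_pow, ← Nat.sub_add_cancel hkn, Nat.add_sub_cancel, pow_add]
      push_cast
      ring
    rw [hsplit]
    exact (isIntegral_natCast _).mul (hx.isIntegral.pow k)
  denom_le := by
    rw [Nat.cast_pow]
    exact pow_le_pow_left₀ (Nat.cast_nonneg d) hx.denom_le n
  house_le := by
    have hB : 0 ≤ B := zero_le_one.trans hx.one_le
    have := house_nonneg x
    calc ((d ^ n : ℕ) : ℝ) * house (x ^ k) ≤ (d ^ n : ℕ) * house x ^ k := by
          gcongr
          exact house_pow_le x k
      _ = d ^ (n - k) * (d * house x) ^ k := by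
          rw [mul_pow, ← mul_assoc, ← pow_add, Nat.sub_add_cancel hkn, Nat.cast_pow]
      _ ≤ B ^ (n - k) * B ^ k := by
          gcongr
          exacts [hx.denom_le, hx.house_le]
      _ = B ^ n := by rw [← pow_add, Nat.sub_add_cancel hkn]

lemma sum {ι : Type*} [Fintype ι] [Nonempty ι] {f : ι → K} (hf : ∀ i, HasSize d B (f i)) :
    HasSize d (Fintype.card ι * B) (∑ i, f i) where
  denom_pos := (hf (Classical.arbitrary ι)).denom_pos
  isIntegral := by
    rw [Finset.mul_sum]
    exact IsIntegral.sum _ fun i _ ↦ (hf i).isIntegral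
  denom_le := by
    have hi := hf (Classical.arbitrary ι)
    exact hi.denom_le.trans (le_mul_of_one_le_left (zero_le_one.trans hi.one_le)
      (Nat.one_le_cast.2 Fintype.card_pos))
  house_le := by
    calc d * house (∑ i, f i) ≤ d * ∑ i, house (f i) := by
          gcongr
          exact house_sum_le_sum_house _ _
      _ ≤ ∑ _i : ι, B := by
          rw [Finset.mul_sum]
          exact Finset.sum_le_sum fun i _ ↦ (hf i).house_le
      _ = Fintype.card ι * B := by rw [Finset.sum_const, nsmul_eq_mul, Finset.card_univ]

lemma natCast_add_natCast_mul (hx : HasSize d B x) {i j q : ℕ} (hi : i < q) (hj : j < q) :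
    HasSize d (q * (2 * B)) (i + j * x) where
  denom_pos := hx.denom_pos
  isIntegral := by
    rw [mul_add, mul_left_comm]
    exact ((isIntegral_natCast _).mul (isIntegral_natCast _)).add
      ((isIntegral_natCast _).mul hx.isIntegral)
  denom_le := by
    have hq : (1 : ℝ) ≤ q := by exact_mod_cast (Nat.zero_le i).trans_lt hi
    nlinarith [hx.denom_le, hx.one_le]
  house_le := by
    have : 0 ≤ B := zero_le_one.trans hx.one_le
    have hi' : (i : ℝ) ≤ q := by exact_mod_cast hi.le
    have hj' : (j : ℝ) ≤ q := by exact_mod_cast hj.le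
    have hhouse_i : house (i : K) = i := by simpa using house_intCast (K := K) i
    calc d * house ((i : K) + j * x) ≤ d * (house (i : K) + house (j * x)) := by
          gcongr
          exact house_add_le _ _
      _ = i * d + j * (d * house x) := by
          rw [hhouse_i, house_nat_mul]
          ring
      _ ≤ q * B + q * B := by
          have := house_nonneg x
          gcongr
          exacts [hx.denom_le, hx.house_le]
      _ = q * (2 * B) := by ring

end HasSize

lemma one_le_norm_norm {x : K} (hx : IsIntegral ℤ x) (hx0 : x ≠ 0) : 1 ≤ ‖Algebra.norm ℚ x‖ := by
  obtain ⟨y, hy⟩ := IsIntegrallyClosed.isIntegral_iff.1 (Algebra.isIntegral_norm ℚ hx)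
  have hy0 : y ≠ 0 := by
    rintro rfl
    exact hx0 (Algebra.norm_eq_zero_iff.1 (hy.symm.trans (map_zero _)))
  rw [← hy, eq_intCast, ← Rat.norm_cast_real, Rat.cast_intCast, Real.norm_eq_abs]
  exact_mod_cast Int.one_le_abs hy0

/-- Liouville's inequality. -/
lemma HasSize.one_le_norm_mul_pow {d : ℕ} {B : ℝ} {x : K} (hx : HasSize d B x) (hx0 : x ≠ 0)
    (σ : K →+* ℂ) : 1 ≤ d * ‖σ x‖ * B ^ (Module.finrank ℚ K - 1) := by
  have hd : (d : K) ≠ 0 := Nat.cast_ne_zero.2 hx.denom_pos.ne'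
  calc 1 ≤ ‖Algebra.norm ℚ (d * x)‖ := one_le_norm_norm hx.isIntegral (mul_ne_zero hd hx0)
    _ ≤ ‖σ (d * x)‖ * house (d * x) ^ (Module.finrank ℚ K - 1) :=
        norm_norm_le_norm_mul_house_pow _ σ
    _ ≤ d * ‖σ x‖ * B ^ (Module.finrank ℚ K - 1) := by
        have := house_nonneg x
        rw [map_mul, map_natCast, norm_mul, Complex.norm_natCast, house_nat_mul]
        gcongr
        exact hx.house_le

/-- The constant `C` is implicit in `house.exists_ne_zero_int_vec_house_le`, where it is private. -/
lemma exists_siegel_constant (K : Type*) [Field K] [NumberField K] :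
    ∃ C : ℝ, ∀ (ι κ : Type) [Fintype ι] [Fintype κ] (T : Matrix ι κ (𝓞 K)) (A : ℝ), T ≠ 0 →
      0 < Fintype.card ι → Fintype.card ι < Fintype.card κ → (∀ k l, house (T k l : K) ≤ A) →
      ∃ ξ : κ → 𝓞 K, ξ ≠ 0 ∧ T.mulVec ξ = 0 ∧ ∀ l, house (ξ l : K) ≤
        C * (C * Fintype.card κ * A) ^
          ((Fintype.card ι : ℝ) / ((Fintype.card κ : ℝ) - (Fintype.card ι : ℝ))) := by
  classical
  exact ⟨_, fun ι κ _ _ T A hT hι hικ hA ↦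
    house.exists_ne_zero_int_vec_house_le K T hT hι hικ rfl hA rfl⟩

lemma exists_ne_zero_mulVec_eq_zero_house_le (K : Type*) [Field K] [NumberField K] :
    ∃ C : ℝ, 1 ≤ C ∧ ∀ (ι κ : Type) [Fintype ι] [Fintype κ] (T : Matrix ι κ (𝓞 K)) (A : ℝ),
      T ≠ 0 → Fintype.card κ = 2 * Fintype.card ι → (∀ k l, house (T k l : K) ≤ A) →
      ∃ ξ : κ → 𝓞 K, ξ ≠ 0 ∧ T.mulVec ξ = 0 ∧
        ∀ l, house (ξ l : K) ≤ C * (Fintype.card κ * A) := by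
  obtain ⟨C, hC⟩ := exists_siegel_constant K
  refine ⟨max 1 (C * C), le_max_left _ _, fun ι κ _ _ T A hT hcard hA ↦ ?_⟩
  obtain ⟨k, l, -⟩ : ∃ k l, T k l ≠ 0 := by
    contrapose! hT
    exact Matrix.ext hT
  have hA0 : 0 ≤ A := (house_nonneg _).trans (hA k l)
  have hι : 0 < Fintype.card ι := Fintype.card_pos_iff.2 ⟨k⟩
  obtain ⟨ξ, hξ0, hTξ, hξ⟩ := hC ι κ T A hT hι (by lia) hA
  have hexponent :
      (Fintype.card ι : ℝ) / ((Fintype.card κ : ℝ) - (Fintype.card ι : ℝ)) = 1 := by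
    rw [hcard]
    push_cast
    field_simp
    ring
  refine ⟨ξ, hξ0, hTξ, fun l ↦ ?_⟩
  calc house (ξ l : K) ≤ C * (C * Fintype.card κ * A) := by
        simpa only [hexponent, Real.rpow_one] using hξ l
    _ = C * C * (Fintype.card κ * A) := by ring
    _ ≤ max 1 (C * C) * (Fintype.card κ * A) := by
        gcongr
        exact le_max_right _ _

/-- Siegel's lemma. -/
theorem exists_ne_zero_hasSize_forall_sum_eq_zero (K : Type*) [Field K] [NumberField K] :
    ∃ C : ℝ, 1 ≤ C ∧ ∀ (ι κ : Type) [Fintype ι] [Fintype κ] [Nonempty κ] (t : ι → κ → K) (d : ℕ)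
      (A : ℝ), Fintype.card κ = 2 * Fintype.card ι → (∀ i j, HasSize d A (t i j)) →
      ∃ η : κ → K, η ≠ 0 ∧ (∀ j, HasSize 1 (C * (Fintype.card κ * A)) (η j)) ∧
        ∀ i, ∑ j, η j * t i j = 0 := by
  obtain ⟨C, hC1, hC⟩ := exists_ne_zero_mulVec_eq_zero_house_le K
  refine ⟨C, hC1, fun ι κ _ _ _ t d A hcard ht ↦ ?_⟩
  have hκ : 0 < Fintype.card κ := Fintype.card_pos
  obtain ⟨i₀⟩ : Nonempty ι := Fintype.card_pos_iff.1 (by lia)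
  let j₀ : κ := Classical.arbitrary κ
  have hd : (d : K) ≠ 0 := Nat.cast_ne_zero.2 (ht i₀ j₀).denom_pos.ne'
  have hbound : 1 ≤ C * (Fintype.card κ * A) :=
    one_le_mul_of_one_le_of_one_le hC1
      (one_le_mul_of_one_le_of_one_le (Nat.one_le_cast.2 hκ) (ht i₀ j₀).one_le)
  by_cases ht0 : ∀ i j, t i j = 0
  · have hhouse_one : house (1 : K) = 1 := by simpa using house_intCast (K := K) 1
    exact ⟨fun _ ↦ 1, fun h ↦ one_ne_zero (congrFun h j₀),
      fun _ ↦ .of_isIntegral isIntegral_one hbound (hhouse_one.trans_le hbound), by simp [ht0]⟩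
  let T : Matrix ι κ (𝓞 K) := fun i j ↦ ⟨d * t i j, (ht i j).isIntegral⟩
  have hT (i : ι) (j : κ) : algebraMap (𝓞 K) K (T i j) = d * t i j := rfl
  have hT0 : T ≠ 0 := by
    refine fun h ↦ ht0 fun i j ↦ (mul_eq_zero.1 ?_).resolve_left hd
    rw [← hT, h, Matrix.zero_apply, map_zero]
  obtain ⟨ξ, hξ0, hTξ, hξ⟩ := hC ι κ T A hT0 hcard
    fun i j ↦ (house_nat_mul (t i j) d).trans_le (ht i j).house_le
  refine ⟨fun j ↦ ξ j, fun h ↦ hξ0 (funext fun j ↦ RingOfIntegers.ext (congrFun h j)),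
    fun j ↦ .of_isIntegral (ξ j).isIntegral_coe hbound (hξ j), fun i ↦ ?_⟩
  have hrow : ∑ j, (d : K) * t i j * ξ j = 0 := by
    simpa only [Matrix.mulVec, dotProduct, map_sum, map_mul, hT, Pi.zero_apply, map_zero] using
      congrArg (algebraMap (𝓞 K) K) (congrFun hTξ i)
  refine (mul_eq_zero.1 (Eq.trans ?_ hrow)).resolve_left hd
  rw [Finset.mul_sum]
  exact Finset.sum_congr rfl fun j _ ↦ by ring

end Size

section MixedPowerSum

open NumberField

variable {K : Type*} [Field K] {ι : Type*} [Fintype ι]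

/-- The weighted sum of the products `w i ^ k * u i ^ l`. When `exp (lam * w i) = u i`, it is up to
the factor `lam ^ k` the `k`-th derivative at `l` of the exponential sum with coefficients `η` and
frequencies `lam * w i`. -/
def mixedPowerSum (w u η : ι → K) (k l : ℕ) : K := ∑ i, η i * (w i ^ k * u i ^ l)

lemma exists_mixedPowerSum_zero_ne_zero {w : ι → K} (hw : Function.Injective w) (u : ι → K)
    {η : ι → K} (hη : η ≠ 0) : ∃ k, mixedPowerSum w u η k 0 ≠ 0 := by
  contrapose! hη
  let e := Fintype.equivFin ι
  have hηe : η ∘ e.symm = 0 := by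
    refine Matrix.eq_zero_of_forall_pow_sum_mul_pow_eq_zero (hw.comp e.symm.injective) fun k ↦ ?_
    rw [← hη k, mixedPowerSum, ← e.symm.sum_comp]
    simp only [Function.comp_apply, pow_zero, mul_one]
  exact funext fun i ↦ by simpa using congrFun hηe (e i)

lemma exists_first_mixedPowerSum_ne_zero {w : ι → K} (hw : Function.Injective w) (u : ι → K)
    {η : ι → K} (hη : η ≠ 0) {m : ℕ} (hm : 0 < m) :
    ∃ r, (∃ l < m, mixedPowerSum w u η r l ≠ 0) ∧
      ∀ k < r, ∀ l < m, mixedPowerSum w u η k l = 0 := by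
  classical
  have hex : ∃ r, ∃ l < m, mixedPowerSum w u η r l ≠ 0 :=
    (exists_mixedPowerSum_zero_ne_zero hw u hη).imp fun k hk ↦ ⟨0, hm, hk⟩
  refine ⟨Nat.find hex, Nat.find_spec hex, fun k hk l hl ↦ ?_⟩
  by_contra hne
  exact Nat.find_min hex hk ⟨l, hl, hne⟩

lemma iteratedDeriv_expSum_natCast {σ : K →+* ℂ} {lam : ℂ} {w u : ι → K}
    (hexp : ∀ i, Complex.exp (lam * σ (w i)) = σ (u i)) (η : ι → K) (k l : ℕ) :
    iteratedDeriv k (expSum (fun i ↦ σ (η i)) fun i ↦ lam * σ (w i)) l =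
      lam ^ k * σ (mixedPowerSum w u η k l) := by
  rw [iteratedDeriv_expSum, mixedPowerSum, map_sum, Finset.mul_sum]
  refine Finset.sum_congr rfl fun i _ ↦ ?_
  rw [mul_comm (lam * σ (w i)) l, Complex.exp_nat_mul, hexp, map_mul, map_mul, map_pow, map_pow]
  ring

variable [NumberField K]

lemma hasSize_mixedPowerSum [Nonempty ι] {w u η : ι → K} {d e : ℕ} {W U H : ℝ}
    (hw : ∀ i, HasSize d W (w i)) (hu : ∀ i, HasSize e U (u i)) (hη : ∀ i, HasSize 1 H (η i))
    {k l m : ℕ} (hlm : l ≤ m) :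
    HasSize (d ^ k * e ^ m) (Fintype.card ι * (H * (W ^ k * U ^ m))) (mixedPowerSum w u η k l) := by
  refine HasSize.sum fun i ↦ ?_
  simpa only [one_mul] using (hη i).mul (((hw i).pow_of_le le_rfl).mul ((hu i).pow_of_le hlm))

/-- The extrapolation step: the exponential sum vanishes to order `r` at `0, …, m - 1`, so the
Schwarz lemma makes its next derivatives at these points small. -/
lemma norm_mixedPowerSum_le {σ : K →+* ℂ} {lam : ℂ} {w u η : ι → K}
    (hexp : ∀ i, Complex.exp (lam * σ (w i)) = σ (u i)) {d : ℕ} {W H : ℝ}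
    (hw : ∀ i, HasSize d W (w i)) (hη : ∀ i, HasSize 1 H (η i)) {m r : ℕ}
    (hzero : ∀ k < r, ∀ l < m, mixedPowerSum w u η k l = 0) {R : ℝ} (hmR : m < R) {l : ℕ}
    (hl : l < m) :
    ‖lam‖ ^ r * ‖σ (mixedPowerSum w u η r l)‖ ≤
      r ! * (Fintype.card ι * H * Real.exp (‖lam‖ * W * R) * (2 * m / (R - m)) ^ (r * m)) := by
  let F := expSum (fun i ↦ σ (η i)) fun i ↦ lam * σ (w i)
  have hF : Differentiable ℂ F := differentiable_expSum _ _
  let S : Finset ℂ := (Finset.range m).map Nat.castEmbedding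
  have hS_norm (a : ℂ) (ha : a ∈ S) : ‖a‖ ≤ m := by
    obtain ⟨l', hl', rfl⟩ := Finset.mem_map.1 ha
    simpa using (Finset.mem_range.1 hl').le
  have hS_order (a : ℂ) (ha : a ∈ S) : r ≤ analyticOrderAt F a := by
    obtain ⟨l', hl', rfl⟩ := Finset.mem_map.1 ha
    rw [natCast_le_analyticOrderAt_iff_iteratedDeriv_eq_zero (hF.analyticAt _)]
    intro k hk
    rw [Nat.castEmbedding_apply, iteratedDeriv_expSum_natCast hexp,
      hzero k hk l' (Finset.mem_range.1 hl'), map_zero, mul_zero]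
  have hF_sphere (z : ℂ) (hz : ‖z‖ = R) :
      ‖F z‖ ≤ Fintype.card ι * H * Real.exp (‖lam‖ * W * R) := by
    rw [← hz]
    refine norm_expSum_le (fun i ↦ (norm_embedding_le_house _ σ).trans (hη i).house_le_bound)
      (fun i ↦ ?_) z
    rw [norm_mul]
    gcongr
    exact (norm_embedding_le_house _ σ).trans (hw i).house_le_bound
  have hlm : ‖(l : ℂ)‖ + 1 ≤ m := by
    rw [Complex.norm_natCast]
    exact_mod_cast hl
  calc ‖lam‖ ^ r * ‖σ (mixedPowerSum w u η r l)‖ = ‖iteratedDeriv r F l‖ := by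
        rw [iteratedDeriv_expSum_natCast hexp, norm_mul, norm_pow]
    _ ≤ _ := by
        simpa only [S, Finset.card_map, Finset.card_range] using
          norm_iteratedDeriv_le_mul_pow_of_le_analyticOrderAt hF hS_order hS_norm hmR hF_sphere
            hlm r

lemma exists_mixedPowerSum_eq_zero (K : Type*) [Field K] [NumberField K] :
    ∃ C : ℝ, 1 ≤ C ∧ ∀ (ι : Type) [Fintype ι] [Nonempty ι] (w u : ι → K) (d e : ℕ) (W U : ℝ)
      (n m : ℕ), Fintype.card ι = 2 * (n * m) → (∀ i, HasSize d W (w i)) →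
      (∀ i, HasSize e U (u i)) →
      ∃ η : ι → K, η ≠ 0 ∧ (∀ i, HasSize 1 (C * (Fintype.card ι * (W ^ n * U ^ m))) (η i)) ∧
        ∀ k < n, ∀ l < m, mixedPowerSum w u η k l = 0 := by
  obtain ⟨C, hC1, hC⟩ := exists_ne_zero_hasSize_forall_sum_eq_zero K
  refine ⟨C, hC1, fun ι _ _ w u d e W U n m hcard hw hu ↦ ?_⟩
  obtain ⟨η, hη0, hη, hsum⟩ := hC (Fin n × Fin m) ι (fun p i ↦ w i ^ (p.1 : ℕ) * u i ^ (p.2 : ℕ))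
    (d ^ n * e ^ m) (W ^ n * U ^ m) (by simpa using hcard)
    fun p i ↦ ((hw i).pow_of_le p.1.2.le).mul ((hu i).pow_of_le p.2.2.le)
  exact ⟨η, hη0, hη, fun k hk l hl ↦ hsum (⟨k, hk⟩, ⟨l, hl⟩)⟩

/-- Comparison of Liouville's lower bound with the analytic upper bound. -/
lemma norm_pow_le_of_mixedPowerSum_ne_zero [Nonempty ι] {σ : K →+* ℂ} {lam : ℂ}
    {w u η : ι → K} (hexp : ∀ i, Complex.exp (lam * σ (w i)) = σ (u i)) {d e : ℕ} {W U H : ℝ}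
    (hw : ∀ i, HasSize d W (w i)) (hu : ∀ i, HasSize e U (u i)) (hη : ∀ i, HasSize 1 H (η i))
    {m r : ℕ} (hzero : ∀ k < r, ∀ l < m, mixedPowerSum w u η k l = 0) {R : ℝ} (hmR : m < R)
    {l : ℕ} (hl : l < m) (hne : mixedPowerSum w u η r l ≠ 0) :
    ‖lam‖ ^ r ≤ d ^ r * U ^ m *
      (r ! * (Fintype.card ι * H * Real.exp (‖lam‖ * W * R) * (2 * m / (R - m)) ^ (r * m))) *
      (Fintype.card ι * (H * (W ^ r * U ^ m))) ^ (Module.finrank ℚ K - 1) := by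
  have hsize := hasSize_mixedPowerSum (k := r) hw hu hη hl.le
  have he : (e : ℝ) ≤ U := (hu (Classical.arbitrary ι)).denom_le
  have hU : 0 ≤ U := (Nat.cast_nonneg e).trans he
  let B := Fintype.card ι * (H * (W ^ r * U ^ m))
  have hB : 0 ≤ B := zero_le_one.trans hsize.one_le
  let x := ‖σ (mixedPowerSum w u η r l)‖
  have hupper := norm_mixedPowerSum_le hexp hw hη hzero hmR hl
  calc ‖lam‖ ^ r
      ≤ ‖lam‖ ^ r * ((d ^ r * e ^ m : ℕ) * x * B ^ (Module.finrank ℚ K - 1)) :=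
        le_mul_of_one_le_right (by positivity) (hsize.one_le_norm_mul_pow hne σ)
    _ = d ^ r * e ^ m * (‖lam‖ ^ r * x) * B ^ (Module.finrank ℚ K - 1) := by
        push_cast
        ring
    _ ≤ _ := mul_le_mul_of_nonneg_right
        (mul_le_mul (by gcongr) hupper (by positivity) (by positivity)) (by positivity)

theorem exists_norm_pow_le (σ : K →+* ℂ) (lam : ℂ) :
    ∃ C : ℝ, 1 ≤ C ∧ ∀ (ι : Type) [Fintype ι] [Nonempty ι] (w u : ι → K) (d e : ℕ) (W U H : ℝ)
      (n m : ℕ), Fintype.card ι = 2 * (n * m) → Function.Injective w →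
      (∀ i, Complex.exp (lam * σ (w i)) = σ (u i)) → (∀ i, HasSize d W (w i)) →
      (∀ i, HasSize e U (u i)) → H = C * (Fintype.card ι * (W ^ n * U ^ m)) →
      ∃ r ≥ n, ∀ R > (m : ℝ), ‖lam‖ ^ r ≤ d ^ r * U ^ m *
          (r ! * (Fintype.card ι * H * Real.exp (‖lam‖ * W * R) * (2 * m / (R - m)) ^ (r * m))) *
          (Fintype.card ι * (H * (W ^ r * U ^ m))) ^ (Module.finrank ℚ K - 1) := by
  obtain ⟨C, hC1, hC⟩ := exists_mixedPowerSum_eq_zero K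
  refine ⟨C, hC1, fun ι _ _ w u d e W U H n m hcard hw_inj hexp hw hu hH ↦ ?_⟩
  obtain ⟨η, hη0, hη, hη_zero⟩ := hC ι w u d e W U n m hcard hw hu
  rw [← hH] at hη
  have hm : 0 < m := Nat.pos_of_ne_zero fun hm ↦ Fintype.card_ne_zero (α := ι) (by simp [hcard, hm])
  obtain ⟨r, ⟨l, hl, hne⟩, hr_zero⟩ := exists_first_mixedPowerSum_ne_zero hw_inj u hη0 hm
  have hnr : n ≤ r := le_of_not_gt fun hrn ↦ hne (hη_zero r hrn l hl)
  exact ⟨r, hnr, fun R hR ↦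
    norm_pow_le_of_mixedPowerSum_ne_zero hexp hw hu hη hr_zero hR hl hne⟩

end MixedPowerSum

section Parameters

/-! The auxiliary function has `(2 * m * N) ^ 2` frequencies and vanishes to order `2 * m * N ^ 2`
at `m` points. For fixed `m`, everything that arises is bounded by the `r`-th power of a constant
times a power of `N`. -/

variable {m N r : ℕ}

lemma sq_two_mul_mul_le_pow (hm : 0 < m) (hN : 0 < N) (hr : 2 * m * N ^ 2 ≤ r) :
    ((2 * m * N : ℕ) : ℝ) ^ 2 ≤ (4 * m) ^ r := by
  have hr0 : r ≠ 0 := (lt_of_lt_of_le (by positivity) hr).ne'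
  have hnat : (2 * m * N) ^ 2 ≤ (4 * m) ^ r := by
    calc (2 * m * N) ^ 2 = 2 * m * (2 * m * N ^ 2) := by ring
      _ ≤ (2 * m) ^ r * 2 ^ r := by
          gcongr
          · exact Nat.le_self_pow hr0 _
          · exact hr.trans Nat.lt_two_pow_self.le
      _ = (4 * m) ^ r := by
          rw [← mul_pow]
          ring
  exact_mod_cast hnat

lemma pow_two_mul_mul_pow_le {V : ℝ} (hV : 1 ≤ V) (hr : 2 * m * N ^ 2 ≤ r) :
    (V ^ (2 * m * N)) ^ m ≤ (V ^ m) ^ r := by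
  rw [pow_right_comm]
  have hqr : 2 * m * N ≤ r := by
    refine le_trans ?_ hr
    gcongr
    exact Nat.le_self_pow two_ne_zero N
  exact pow_le_pow_right₀ (one_le_pow₀ hV) hqr

lemma two_mul_le_div (hN : 0 < N) (hr : 2 * m * N ^ 2 ≤ r) : 2 * (m : ℝ) ≤ r / N := by
  rw [le_div_iff₀ (Nat.cast_pos.2 hN)]
  exact_mod_cast le_trans (Nat.mul_le_mul_left _ (Nat.le_self_pow two_ne_zero N)) hr

lemma siegel_bound_le_pow (hm : 0 < m) (hN : 0 < N) (hr : 2 * m * N ^ 2 ≤ r) {C M V : ℝ}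
    (hC : 1 ≤ C) (hM : 1 ≤ M) (hV : 1 ≤ V) :
    C * (((2 * m * N : ℕ) : ℝ) ^ 2 *
      (((2 * m * N : ℕ) * M) ^ (2 * m * N ^ 2) * (V ^ (2 * m * N)) ^ m)) ≤
      (C * (4 * m) * (2 * m * M) * V ^ m * N) ^ r := by
  have hr0 : r ≠ 0 := (lt_of_lt_of_le (by positivity) hr).ne'
  have hq : 1 ≤ 2 * m * N := Nat.succ_le_of_lt (by positivity)
  have hqM : 1 ≤ ((2 * m * N : ℕ) : ℝ) * M :=
    one_le_mul_of_one_le_of_one_le (Nat.one_le_cast.2 hq) hM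
  calc _ ≤ C ^ r * ((4 * m) ^ r * (((2 * m * N : ℕ) * M) ^ r * (V ^ m) ^ r)) := by
        gcongr
        · exact le_self_pow₀ hC hr0
        · exact sq_two_mul_mul_le_pow hm hN hr
        · exact pow_two_mul_mul_pow_le hV hr
    _ = (C * (4 * m) * (2 * m * M) * V ^ m * N) ^ r := by
        simp only [← mul_pow]
        push_cast
        ring

/-- The Schwarz lemma on the circle of radius `r / N` saves a factor `N ^ m` in the `r`-th root,
while the factorial costs only `N ^ 2`. -/
lemma factorial_mul_pow_le (hm : 0 < m) (hN : 0 < N) (hr : 2 * m * N ^ 2 ≤ r) :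
    (r ! : ℝ) * (2 * m / ((r : ℝ) / N - m)) ^ (r * m) ≤ ((4 * m) ^ m * (N ^ 2 / N ^ m)) ^ r := by
  have hr0 : 0 < r := lt_of_lt_of_le (by positivity) hr
  have hr' : 2 * (m : ℝ) * N ^ 2 ≤ r := by exact_mod_cast hr
  have hm1 : (1 : ℝ) ≤ m := Nat.one_le_cast.2 hm
  have hradius := two_mul_le_div hN hr
  have hratio_nonneg : 0 ≤ 2 * (m : ℝ) / (r / N - m) := div_nonneg (by positivity) (by linarith)
  have hratio : 2 * (m : ℝ) / (r / N - m) ≤ 4 * m * N / r := by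
    calc 2 * (m : ℝ) / (r / N - m) ≤ 2 * m / (r / N / 2) := by
          gcongr
          linarith
      _ = 4 * m * N / r := by
          field_simp
          norm_num
  have hroot : (r : ℝ) * (4 * m * N / r) ^ m ≤ (4 * m) ^ m * (N ^ 2 / N ^ m) := by
    have hNr : (N : ℝ) ^ 2 ≤ r := by nlinarith
    have hNm : (N : ℝ) ^ m * r * N ^ m ≤ N ^ 2 * r ^ m := by
      calc (N : ℝ) ^ m * r * N ^ m = N ^ 2 * ((N ^ 2) ^ (m - 1) * r) := by
            rw [← mul_assoc, mul_pow_sub_one hm.ne']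
            ring
        _ ≤ N ^ 2 * (r ^ (m - 1) * r) := by gcongr
        _ = N ^ 2 * r ^ m := by rw [pow_sub_one_mul hm.ne']
    calc (r : ℝ) * (4 * m * N / r) ^ m = (4 * m) ^ m * (N ^ m * r / r ^ m) := by
          rw [div_pow, mul_pow]
          ring
      _ ≤ (4 * m) ^ m * (N ^ 2 / N ^ m) := by
          gcongr ?_ * ?_
          rwa [div_le_div_iff₀ (by positivity) (by positivity)]
  calc (r ! : ℝ) * (2 * m / ((r : ℝ) / N - m)) ^ (r * m)
      ≤ r ^ r * (4 * m * N / r) ^ (r * m) := by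
        gcongr
        exact_mod_cast Nat.factorial_le_pow r
    _ = (r * (4 * m * N / r) ^ m) ^ r := by rw [mul_pow, ← pow_mul, mul_comm m r]
    _ ≤ _ := by gcongr

lemma exp_mul_radius_eq_pow (hN : 0 < N) (L M : ℝ) :
    Real.exp (L * ((2 * m * N : ℕ) * M) * (r / N)) = Real.exp (2 * m * M * L) ^ r := by
  rw [← Real.exp_nat_mul]
  congr 1
  push_cast
  field_simp

lemma exists_comparison_bound_le_pow (hm : 0 < m) {C D M V : ℝ} (hC : 1 ≤ C) (hD : 0 ≤ D)
    (hM : 1 ≤ M) (hV : 1 ≤ V) (L : ℝ) (h : ℕ) :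
    ∃ A : ℝ, 0 ≤ A ∧ ∀ (N r : ℕ) (q H : ℝ), 0 < N → 2 * m * N ^ 2 ≤ r → q = (2 * m * N : ℕ) →
      H = C * (q ^ 2 * ((q * M) ^ (2 * m * N ^ 2) * (V ^ (2 * m * N)) ^ m)) →
      D ^ r * (V ^ (2 * m * N)) ^ m *
        (r ! * (q ^ 2 * H * Real.exp (L * (q * M) * (r / N)) *
          (2 * m / ((r : ℝ) / N - m)) ^ (r * m))) *
        (q ^ 2 * (H * ((q * M) ^ r * (V ^ (2 * m * N)) ^ m))) ^ h ≤
      (A * (N ^ (2 * h + 3) / N ^ m)) ^ r := by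
  let c := C * (4 * m) * (2 * m * M) * V ^ m
  let E := Real.exp (2 * m * M * L)
  refine ⟨D * V ^ m * (4 * m) ^ m * (4 * m * c) * E * (4 * m * c * (2 * m * M) * V ^ m) ^ h,
    by positivity, fun N r q H hN hr hq hH ↦ ?_⟩
  let S := (r ! : ℝ) * (2 * m / ((r : ℝ) / N - m)) ^ (r * m)
  have hq_nonneg : 0 ≤ q := hq ▸ Nat.cast_nonneg _
  have hH_nonneg : 0 ≤ H := hH ▸ by positivity
  have hq_sq : q ^ 2 ≤ (4 * m) ^ r := hq ▸ sq_two_mul_mul_le_pow hm hN hr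
  have hH_le : H ≤ (c * N) ^ r := by
    rw [hH, hq]
    exact siegel_bound_le_pow hm hN hr hC hM hV
  have hexp : Real.exp (L * (q * M) * (r / N)) = E ^ r := hq ▸ exp_mul_radius_eq_pow hN L M
  have hS : S ≤ ((4 * m) ^ m * (N ^ 2 / N ^ m)) ^ r := factorial_mul_pow_le hm hN hr
  have hU : (V ^ (2 * m * N)) ^ m ≤ (V ^ m) ^ r := pow_two_mul_mul_pow_le hV hr
  calc _ = S * (D ^ r * (V ^ (2 * m * N)) ^ m * (q ^ 2 * H * E ^ r) *
          (q ^ 2 * (H * ((q * M) ^ r * (V ^ (2 * m * N)) ^ m))) ^ h) := by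
        rw [hexp]
        ring
    _ ≤ ((4 * m) ^ m * (N ^ 2 / N ^ m)) ^ r *
          (D ^ r * (V ^ m) ^ r * ((4 * m) ^ r * (c * N) ^ r * E ^ r) *
          ((4 * m) ^ r * ((c * N) ^ r * ((q * M) ^ r * (V ^ m) ^ r))) ^ h) := by
        gcongr
    _ = ((4 * m) ^ m * (N ^ 2 / N ^ m) * (D * V ^ m * (4 * m * (c * N) * E) *
          (4 * m * (c * N * (q * M * V ^ m))) ^ h)) ^ r := by
        simp only [← mul_pow, pow_right_comm _ r h]
    _ = _ := by
        rw [hq]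
        push_cast
        ring

/-- The choice of `m` makes the saving `N ^ m` exceed the total loss `N ^ (2 * h + 3)`. -/
lemma exists_forall_natCast_le_of_pow_le {C D M V L : ℝ} (hC : 1 ≤ C) (hD : 0 ≤ D) (hM : 1 ≤ M)
    (hV : 1 ≤ V) (hL : 0 < L) {h : ℕ} (hm : m = 2 * h + 4) :
    ∃ A : ℝ, ∀ (N r : ℕ) (q H : ℝ), 0 < N → 2 * m * N ^ 2 ≤ r → q = (2 * m * N : ℕ) →
      H = C * (q ^ 2 * ((q * M) ^ (2 * m * N ^ 2) * (V ^ (2 * m * N)) ^ m)) →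
      L ^ r ≤ D ^ r * (V ^ (2 * m * N)) ^ m *
        (r ! * (q ^ 2 * H * Real.exp (L * (q * M) * (r / N)) *
          (2 * m / ((r : ℝ) / N - m)) ^ (r * m))) *
        (q ^ 2 * (H * ((q * M) ^ r * (V ^ (2 * m * N)) ^ m))) ^ h →
      N ≤ A := by
  have hm0 : 0 < m := by lia
  obtain ⟨A, hA0, hA⟩ := exists_comparison_bound_le_pow hm0 hC hD hM hV L h
  refine ⟨A / L, fun N r q H hN hr hq hH hle ↦ ?_⟩
  have hr0 : r ≠ 0 := (lt_of_lt_of_le (by positivity) hr).ne'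
  have hN0 : (N : ℝ) ≠ 0 := Nat.cast_ne_zero.2 hN.ne'
  have hgain : (N : ℝ) ^ (2 * h + 3) / N ^ m = (N : ℝ)⁻¹ := by
    rw [hm, pow_succ _ (2 * h + 3)]
    field_simp
  have hroot : L ≤ A * (N : ℝ)⁻¹ := by
    refine le_of_pow_le_pow_left₀ hr0 (by positivity) ?_
    exact hgain ▸ hle.trans (hA N r q H hN hr hq hH)
  rwa [le_div_iff₀ hL, mul_comm, ← le_div_iff₀ (by positivity), div_eq_mul_inv]

end Parameters

section GelfondSchneider

variable {K : Type*} [Field K]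

lemma injective_natCast_add_natCast_mul [CharZero K] {b : K}
    (hb : b ∉ Set.range ((↑) : ℚ → K)) :
    Function.Injective fun p : ℕ × ℕ ↦ (p.1 : K) + p.2 * b := by
  rintro ⟨i, j⟩ ⟨i', j'⟩ h
  change (i : K) + j * b = i' + j' * b at h
  have hj : j = j' := by
    by_contra hne
    have hne' : (j : K) - j' ≠ 0 := sub_ne_zero.2 (Nat.cast_injective.ne hne)
    refine hb ⟨(i' - i) / (j - j'), ?_⟩
    push_cast
    rw [div_eq_iff hne']
    linear_combination -h
  subst hj
  simpa using h

lemma exp_mul_map_natCast_add_natCast_mul {σ : K →+* ℂ} {a b c : K} {lam : ℂ}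
    (ha : Complex.exp lam = σ a) (hc : Complex.exp (σ b * lam) = σ c) (i j : ℕ) :
    Complex.exp (lam * σ (i + j * b)) = σ (a ^ i * c ^ j) := by
  rw [map_mul, map_pow, map_pow, ← ha, ← hc, ← Complex.exp_nat_mul, ← Complex.exp_nat_mul,
    ← Complex.exp_add, map_add, map_mul, map_natCast, map_natCast]
  ring_nf

theorem exists_forall_natCast_le_of_injective [NumberField K] (σ : K →+* ℂ) {a b c : K} {lam : ℂ}
    (hlam : lam ≠ 0) (ha : Complex.exp lam = σ a) (hc : Complex.exp (σ b * lam) = σ c) :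
    ∃ (m : ℕ) (T : ℝ), ∀ N : ℕ, 0 < N →
      Function.Injective (fun p : Fin (2 * m * N) × Fin (2 * m * N) ↦
        ((p.1 : ℕ) : K) + (p.2 : ℕ) * b) → N ≤ T := by
  obtain ⟨da, A, hA⟩ := exists_hasSize a
  obtain ⟨db, B, hB⟩ := exists_hasSize b
  obtain ⟨dc, C, hC⟩ := exists_hasSize c
  obtain ⟨S, hS1, hS⟩ := exists_norm_pow_le σ lam
  obtain ⟨m, hm⟩ : ∃ m, m = 2 * (Module.finrank ℚ K - 1) + 4 := ⟨_, rfl⟩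
  obtain ⟨T, hT⟩ := exists_forall_natCast_le_of_pow_le (C := S) (D := db) (M := 2 * B) (V := A * C)
    hS1 (Nat.cast_nonneg db) (by linarith [hB.one_le])
    (one_le_mul_of_one_le_of_one_le hA.one_le hC.one_le) (norm_pos_iff.2 hlam) hm
  refine ⟨m, T, fun N hN hw_inj ↦ ?_⟩
  have hm0 : 0 < m := by lia
  let q := 2 * m * N
  have : NeZero q := ⟨by positivity⟩
  have hcard : Fintype.card (Fin q × Fin q) = q ^ 2 := by simp [sq]
  let w (p : Fin q × Fin q) : K := (p.1 : ℕ) + (p.2 : ℕ) * b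
  let u (p : Fin q × Fin q) : K := a ^ (p.1 : ℕ) * c ^ (p.2 : ℕ)
  have hw (p) : HasSize db (q * (2 * B)) (w p) := hB.natCast_add_natCast_mul p.1.2 p.2.2
  have hu (p) : HasSize (da ^ q * dc ^ q) ((A * C) ^ q) (u p) :=
    mul_pow A C q ▸ (hA.pow_of_le p.1.2.le).mul (hC.pow_of_le p.2.2.le)
  obtain ⟨r, hr, hle⟩ := hS _ w u _ _ _ _ _ (2 * m * N ^ 2) m (by rw [hcard]; ring) hw_inj
    (fun p ↦ exp_mul_map_natCast_add_natCast_mul ha hc p.1 p.2) hw hu rfl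
  have hradius : (m : ℝ) < r / N := by
    have : (0 : ℝ) < m := Nat.cast_pos.2 hm0
    linarith [two_mul_le_div hN hr]
  refine hT N r q _ hN hr rfl rfl ?_
  simpa only [hcard, Nat.cast_pow] using hle _ hradius

theorem mem_range_ratCast_of_exp_mul_eq [NumberField K] (σ : K →+* ℂ) {a b c : K} {lam : ℂ}
    (hlam : lam ≠ 0) (ha : Complex.exp lam = σ a) (hc : Complex.exp (σ b * lam) = σ c) :
    b ∈ Set.range ((↑) : ℚ → K) := by
  by_contra hb
  obtain ⟨m, T, hT⟩ := exists_forall_natCast_le_of_injective σ hlam ha hc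
  obtain ⟨N, hN⟩ := exists_nat_gt (max 0 T)
  obtain ⟨hN0, hTN⟩ := max_lt_iff.1 hN
  exact hTN.not_ge <| hT N (Nat.cast_pos.1 hN0) <|
    (injective_natCast_add_natCast_mul hb).comp (Fin.val_injective.prodMap Fin.val_injective)

end GelfondSchneider

/-- **Gel'fond–Schneider theorem (Hilbert's seventh problem).** Let `α` be a
nonzero algebraic number, `λ ≠ 0` with `e^λ = α`, and `β` an algebraic number
with `β ∉ ℚ`. Then `α^β = e^{βλ}` is transcendental. -/
theorem gelfond_schneider
    (α lam β : ℂ) (hα : α ≠ 0) (hαalg : IsAlgebraic ℚ α)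
    (hlam : lam ≠ 0) (hexp : Complex.exp lam = α)
    (hβalg : IsAlgebraic ℚ β) (hβ : β ∉ Set.range ((↑) : ℚ → ℂ)) :
    Transcendental ℚ (Complex.exp (β * lam)) := by
  intro hγ
  let S : Set ℂ := {α, β, Complex.exp (β * lam)}
  let K := IntermediateField.adjoin ℚ S
  have hK {x : ℂ} (hx : x ∈ S) : x ∈ K := IntermediateField.subset_adjoin ℚ S hx
  have : FiniteDimensional ℚ K := IntermediateField.finiteDimensional_adjoin <| by
    rintro x (rfl | rfl | rfl)
    exacts [hαalg.isIntegral, hβalg.isIntegral, hγ.isIntegral]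
  have : NumberField K := ⟨⟩
  let a : K := ⟨α, hK (by simp [S])⟩
  let b : K := ⟨β, hK (by simp [S])⟩
  let c : K := ⟨Complex.exp (β * lam), hK (by simp [S])⟩
  have ha : Complex.exp lam = algebraMap K ℂ a := hexp
  have hc : Complex.exp (algebraMap K ℂ b * lam) = algebraMap K ℂ c := rfl
  obtain ⟨x, hx⟩ := mem_range_ratCast_of_exp_mul_eq (algebraMap K ℂ) hlam ha hc
  exact hβ ⟨x, by simpa [b] using congrArg (algebraMap K ℂ) hx⟩
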